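/- arXiv:2309.08013 — 2 statements merged into one kernel-verified Lean document; each statement's English description precedes it below -/
import Mathlib

section
/- For 0 < f < e < 1, the standard Poncelet map P_e^f maps the unit circle to itself and admits a lift: there exists a continuous, monotone increasing map L : ℝ → ℝ with L(θ+1) = L(θ)+1 such that P_e^f(cos 2πθ, sin 2πθ) = (cos 2πL(θ), sin 2πL(θ)) for all θ ∈ ℝ, and the translation number lim_{n→∞} Lⁿ(0)/n of L equals the billiard rotation number ρ̂(e,f) = F(ω̂(e,f), e)/(2K(e)). -/
open Real

/-- Incomplete elliptic integral of the first kind `F(φ,e)`. -/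
noncomputable def ellF (φ e : ℝ) : ℝ :=
  ∫ τ in (0:ℝ)..φ, 1 / Real.sqrt (1 - e ^ 2 * Real.sin τ ^ 2)

/-- Complete elliptic integral of the first kind `K(e)`. -/
noncomputable def ellK (e : ℝ) : ℝ := ellF (Real.pi / 2) e

/-- The angle `ω̂(e,f)`. -/
noncomputable def omegaHat (e f : ℝ) : ℝ :=
  Real.arcsin (Real.sqrt ((e ^ 2 - f ^ 2) / (e ^ 2 * (1 - f ^ 2))))

/-- The billiard rotation number `ρ̂(e,f)`. -/
noncomputable def rhoHat (e f : ℝ) : ℝ := ellF (omegaHat e f) e / (2 * ellK e)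

/-- The standard Poncelet map `P_e^f` on the unit circle. -/
noncomputable def poncelet (e f : ℝ) (p : ℝ × ℝ) : ℝ × ℝ :=
  let X := p.1
  let Y := p.2
  let A1 := 2 * f * Real.sqrt ((1 - f ^ 2) * (e ^ 2 - f ^ 2))
  let A2 := e ^ 2 - f ^ 4
  let A3 := e ^ 2 + f ^ 4 - 2 * f ^ 2
  let A4 := e ^ 2 * (1 - 2 * f ^ 2) + f ^ 4
  (-((A1 * A4 * Y * Real.sqrt (1 - e ^ 2 * Y ^ 2) + A2 * A3 * X) /
      (A2 ^ 2 - A1 ^ 2 * e ^ 2 * Y ^ 2)),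
    (A1 * A2 * X * Real.sqrt (1 - e ^ 2 * Y ^ 2) - A3 * A4 * Y) /
      (A2 ^ 2 - A1 ^ 2 * e ^ 2 * Y ^ 2))

open Filter Topology ComplexConjugate

/-!
The Poncelet map becomes a translation in the coordinate `u = F(φ, e)` on the circle of angles `φ`.
Indeed, with `a = F(ω̂, e)`, the coefficients `A₁, …, A₄` are built so that `A₁ / A₂ = sn 2a`,
`-A₃ / A₂ = cn 2a` and `A₄ / A₂ = dn 2a`, and then the formula for the map is the addition theorem
expressing `(cn (u + 2a), sn (u + 2a))` through `cn u`, `sn u`, `dn u`. Since `u`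
increases by `4K` when `φ` increases by `2π`, normalising lengths turns the translation by `2a`
into the translation by `2a / 4K = ρ̂`, and translation numbers are invariant under conjugation.

The addition theorem itself holds because its right-hand side, as a function of `(u, v)`, has zero
derivative along each line `u + v = w`, and at `(w, 0)` it equals `(cn w, sn w)`.
-/

section Translation

variable (Φ : ℝ ≃o ℝ) (ρ : ℝ)

/-- The homeomorphism `Φ⁻¹ ∘ (· + ρ) ∘ Φ` of the line, conjugate through `Φ` to the translation
by `ρ`. -/
def conjTranslation : ℝ ≃o ℝ :=
  Φ.trans ((OrderIso.addRight ρ).trans Φ.symm)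

lemma apply_conjTranslation (x : ℝ) : Φ (conjTranslation Φ ρ x) = Φ x + ρ :=
  Φ.apply_symm_apply _

variable {Φ ρ} (hΦ : ∀ x, Φ (x + 1) = Φ x + 1)

include hΦ

lemma conjTranslation_add_one (x : ℝ) :
    conjTranslation Φ ρ (x + 1) = conjTranslation Φ ρ x + 1 := by
  apply Φ.injective
  rw [hΦ, apply_conjTranslation, apply_conjTranslation, hΦ, add_right_comm]

lemma tendsto_iterate_conjTranslation_div :
    Tendsto (fun n : ℕ => (conjTranslation Φ ρ)^[n] 0 / n) atTop (𝓝 ρ) := by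
  let g : CircleDeg1Lift := ⟨⟨Φ, Φ.monotone⟩, hΦ⟩
  let L : CircleDeg1Lift :=
    ⟨⟨conjTranslation Φ ρ, OrderIso.monotone _⟩, conjTranslation_add_one hΦ⟩
  have hconj : Function.Semiconj g L (CircleDeg1Lift.translate (Multiplicative.ofAdd ρ)) :=
    fun x => by
      rw [CircleDeg1Lift.translate_apply, add_comm]
      exact apply_conjTranslation Φ ρ x
  have hτ : L.translationNumber = ρ :=
    (CircleDeg1Lift.translationNumber_eq_of_semiconj hconj).trans
      (CircleDeg1Lift.translationNumber_translate ρ)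
  have hlim : Tendsto (fun n : ℕ => L^[n] 0 / n) atTop (𝓝 ρ) := by
    simpa only [hτ, CircleDeg1Lift.coe_pow] using L.tendsto_translation_number₀
  exact hlim

end Translation

lemma surjective_of_monotone_sub_id {g : ℝ → ℝ} (hg : Continuous g)
    (hmono : Monotone fun x => g x - x) : Function.Surjective g := by
  refine hg.surjective (tendsto_atTop_mono' _ ?_ (tendsto_atTop_add_const_right _ (g 0) tendsto_id))
    (tendsto_atBot_mono' _ ?_ (tendsto_atBot_add_const_right _ (g 0) tendsto_id))
  · filter_upwards [eventually_ge_atTop 0] with x hx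
    have := hmono hx
    simp only [id] at this ⊢
    linarith
  · filter_upwards [eventually_le_atBot 0] with x hx
    have := hmono hx
    simp only [id] at this ⊢
    linarith

section EllipticIntegral

variable {e : ℝ}

lemma ellF_zero : ellF 0 e = 0 := intervalIntegral.integral_same

lemma ellF_neg (φ : ℝ) : ellF (-φ) e = -ellF φ e := by
  have := intervalIntegral.integral_comp_neg (a := 0) (b := φ)
    fun τ => 1 / √(1 - e ^ 2 * sin τ ^ 2)
  simp only [sin_neg, neg_sq, neg_zero] at this
  rw [ellF, ellF, this, intervalIntegral.integral_symm]

variable (he : e ^ 2 < 1)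
include he

lemma one_sub_sq_mul_sin_sq_pos (φ : ℝ) : 0 < 1 - e ^ 2 * sin φ ^ 2 := by
  nlinarith [sin_sq_le_one φ, sq_nonneg e]

lemma continuous_ellF_integrand : Continuous fun τ => 1 / √(1 - e ^ 2 * sin τ ^ 2) :=
  continuous_const.div (by fun_prop) fun τ => (sqrt_pos.2 (one_sub_sq_mul_sin_sq_pos he τ)).ne'

lemma hasDerivAt_ellF (φ : ℝ) :
    HasDerivAt (fun φ => ellF φ e) (1 / √(1 - e ^ 2 * sin φ ^ 2)) φ :=
  (continuous_ellF_integrand he).integral_hasStrictDerivAt 0 φ |>.hasDerivAt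

lemma continuous_ellF : Continuous fun φ => ellF φ e :=
  continuous_iff_continuousAt.2 fun φ => (hasDerivAt_ellF he φ).continuousAt

lemma monotone_ellF_sub_id : Monotone fun φ => ellF φ e - φ := by
  have hderiv (φ : ℝ) := (hasDerivAt_ellF he φ).sub (hasDerivAt_id φ)
  refine monotone_of_hasDerivAt_nonneg hderiv fun φ => sub_nonneg.2 ?_
  rw [one_le_div (sqrt_pos.2 (one_sub_sq_mul_sin_sq_pos he φ)), sqrt_le_one]
  nlinarith [mul_nonneg (sq_nonneg e) (sq_nonneg (sin φ))]

lemma strictMono_ellF : StrictMono fun φ => ellF φ e := by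
  simpa using (monotone_ellF_sub_id he).add_strictMono strictMono_id

lemma ellK_pos : 0 < ellK e := by
  simpa only [ellF_zero, ellK] using strictMono_ellF he pi_div_two_pos

lemma ellF_add_pi (φ : ℝ) : ellF (φ + π) e = ellF φ e + 2 * ellK e := by
  have hint (a b : ℝ) := (continuous_ellF_integrand he).intervalIntegrable
    (μ := MeasureTheory.volume) a b
  have hperiodic : Function.Periodic (fun τ => 1 / √(1 - e ^ 2 * sin τ ^ 2)) π := fun τ => by
    simp only [sin_add_pi, neg_sq]
  calc ellF (φ + π) e
      = ellF φ e + ∫ τ in φ..φ + π, 1 / √(1 - e ^ 2 * sin τ ^ 2) :=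
        (intervalIntegral.integral_add_adjacent_intervals (hint _ _) (hint _ _)).symm
    _ = ellF φ e + ∫ τ in -(π / 2)..π / 2, 1 / √(1 - e ^ 2 * sin τ ^ 2) := by
        rw [hperiodic.intervalIntegral_add_eq φ (-(π / 2))]
        ring_nf
    _ = ellF φ e + (ellF (π / 2) e - ellF (-(π / 2)) e) := by
        rw [ellF, ellF, ellF, intervalIntegral.integral_interval_sub_left (hint _ _) (hint _ _)]
    _ = ellF φ e + 2 * ellK e := by
        rw [ellF_neg, ellK]
        ring

lemma ellF_add_two_pi (φ : ℝ) : ellF (φ + 2 * π) e = ellF φ e + 4 * ellK e := by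
  rw [two_mul, ← add_assoc, ellF_add_pi he, ellF_add_pi he]
  ring

/-- The incomplete elliptic integral `F(·, e)` as an automorphism of the ordered line. -/
noncomputable def ellFOrderIso : ℝ ≃o ℝ :=
  (strictMono_ellF he).orderIsoOfSurjective _
    (surjective_of_monotone_sub_id (continuous_ellF he) (monotone_ellF_sub_id he))

/-- The coordinate `θ ↦ F(2πθ, e) / 4K(e)` on the line covering the circle `ℝ / ℤ`, in which the
Poncelet maps of parameter `e` are translations. -/
noncomputable def ellPhase : ℝ ≃o ℝ :=
  (OrderIso.mulLeft₀ (2 * π) two_pi_pos).trans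
    ((ellFOrderIso he).trans (OrderIso.divRight₀ (4 * ellK e) (mul_pos four_pos (ellK_pos he))))

lemma ellPhase_apply (θ : ℝ) :
    ellPhase he θ = ellF (2 * π * θ) e / (4 * ellK e) := rfl

lemma ellPhase_add_one (θ : ℝ) : ellPhase he (θ + 1) = ellPhase he θ + 1 := by
  have hK := ellK_pos he
  rw [ellPhase_apply, ellPhase_apply, mul_add, mul_one, ellF_add_two_pi he, add_div,
    div_self (by positivity)]

end EllipticIntegral

section JacobiFunctions

variable {e : ℝ} (he : e ^ 2 < 1)

/-- The Jacobi amplitude `am u` of modulus `e`, the inverse function of `F(·, e)`. -/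
noncomputable def jacobiAm : ℝ ≃o ℝ := (ellFOrderIso he).symm

/-- The Jacobi elliptic function `sn u` of modulus `e`. -/
noncomputable def jacobiSn (u : ℝ) : ℝ := sin (jacobiAm he u)

/-- The Jacobi elliptic function `cn u` of modulus `e`. -/
noncomputable def jacobiCn (u : ℝ) : ℝ := cos (jacobiAm he u)

/-- The Jacobi elliptic function `dn u` of modulus `e`. -/
noncomputable def jacobiDn (u : ℝ) : ℝ := √(1 - e ^ 2 * jacobiSn he u ^ 2)

lemma jacobiAm_ellF (φ : ℝ) : jacobiAm he (ellF φ e) = φ :=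
  (ellFOrderIso he).symm_apply_apply φ

lemma ellF_jacobiAm (u : ℝ) : ellF (jacobiAm he u) e = u :=
  (ellFOrderIso he).apply_symm_apply u

lemma jacobiAm_zero : jacobiAm he 0 = 0 := by
  simpa only [ellF_zero] using jacobiAm_ellF he 0

lemma jacobiSn_zero : jacobiSn he 0 = 0 := by rw [jacobiSn, jacobiAm_zero, sin_zero]

lemma jacobiCn_zero : jacobiCn he 0 = 1 := by rw [jacobiCn, jacobiAm_zero, cos_zero]

lemma jacobiDn_zero : jacobiDn he 0 = 1 := by simp [jacobiDn, jacobiSn_zero]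

lemma jacobiSn_sq_add_jacobiCn_sq (u : ℝ) : jacobiSn he u ^ 2 + jacobiCn he u ^ 2 = 1 :=
  sin_sq_add_cos_sq _

lemma jacobiDn_pos (u : ℝ) : 0 < jacobiDn he u :=
  sqrt_pos.2 (one_sub_sq_mul_sin_sq_pos he _)

lemma jacobiDn_sq (u : ℝ) : jacobiDn he u ^ 2 = 1 - e ^ 2 * jacobiSn he u ^ 2 :=
  sq_sqrt (one_sub_sq_mul_sin_sq_pos he _).le

lemma one_sub_sq_mul_jacobiSn_sq_pos (u v : ℝ) :
    0 < 1 - e ^ 2 * jacobiSn he u ^ 2 * jacobiSn he v ^ 2 := by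
  have hle : jacobiSn he v ^ 2 ≤ 1 := sin_sq_le_one _
  nlinarith [jacobiDn_sq he u, pow_pos (jacobiDn_pos he u) 2,
    mul_nonneg (sq_nonneg e) (sq_nonneg (jacobiSn he u))]

lemma exists_jacobiCn_jacobiSn_eq {X Y : ℝ} (h : X ^ 2 + Y ^ 2 = 1) :
    ∃ u, jacobiCn he u = X ∧ jacobiSn he u = Y := by
  obtain ⟨φ, hφ⟩ := (Complex.norm_eq_one_iff ⟨X, Y⟩).1 <| by
    rw [Complex.norm_def, Complex.normSq_mk, ← sq, ← sq, h, sqrt_one]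
  refine ⟨ellF φ e, ?_, ?_⟩
  · simpa [jacobiCn, jacobiAm_ellF, Complex.exp_ofReal_mul_I_re] using congrArg Complex.re hφ
  · simpa [jacobiSn, jacobiAm_ellF, Complex.exp_ofReal_mul_I_im] using congrArg Complex.im hφ

lemma hasDerivAt_jacobiAm (u : ℝ) : HasDerivAt (jacobiAm he) (jacobiDn he u) u := by
  have h := (hasDerivAt_ellF he (jacobiAm he u)).of_local_left_inverse
    (jacobiAm he).continuous.continuousAt (one_div_ne_zero (jacobiDn_pos he u).ne')
    (.of_forall (ellF_jacobiAm he))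
  rwa [inv_div, div_one] at h

lemma hasDerivAt_jacobiSn (u : ℝ) :
    HasDerivAt (jacobiSn he) (jacobiCn he u * jacobiDn he u) u :=
  (hasDerivAt_jacobiAm he u).sin

lemma hasDerivAt_jacobiCn (u : ℝ) :
    HasDerivAt (jacobiCn he) (-jacobiSn he u * jacobiDn he u) u :=
  (hasDerivAt_jacobiAm he u).cos

lemma hasDerivAt_jacobiDn (u : ℝ) :
    HasDerivAt (jacobiDn he) (-(e ^ 2 * jacobiSn he u * jacobiCn he u)) u := by
  have h := ((((hasDerivAt_jacobiSn he u).pow 2).const_mul (e ^ 2)).const_sub 1).sqrt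
    (one_sub_sq_mul_sin_sq_pos he _).ne'
  refine h.congr_deriv ?_
  change _ / (2 * jacobiDn he u) = _
  have := (jacobiDn_pos he u).ne'
  field_simp
  push_cast
  ring

end JacobiFunctions

lemma hasDerivAt_complexMk {f g : ℝ → ℝ} {f' g' x : ℝ} (hf : HasDerivAt f f' x)
    (hg : HasDerivAt g g' x) : HasDerivAt (fun y => (⟨f y, g y⟩ : ℂ)) ⟨f', g'⟩ x := by
  simp only [Complex.mk_eq_add_mul_I]
  exact hf.ofReal_comp.add (hg.ofReal_comp.mul_const Complex.I)

section AdditionTheorem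

variable {e : ℝ} (he : e ^ 2 < 1)

/-- The complex number `cn u + i sn u dn v`. The addition theorem says that
`cn (u + v) + i sn (u + v)` is the quotient of `jacobiFactor he u v` by the conjugate of
`jacobiFactor he v u`. -/
noncomputable def jacobiFactor (u v : ℝ) : ℂ :=
  ⟨jacobiCn he u, jacobiSn he u * jacobiDn he v⟩

lemma jacobiFactor_zero_left (v : ℝ) : jacobiFactor he 0 v = 1 := by
  rw [jacobiFactor, jacobiSn_zero, jacobiCn_zero, zero_mul]
  rfl

lemma jacobiFactor_zero_right (u : ℝ) : jacobiFactor he u 0 = ⟨jacobiCn he u, jacobiSn he u⟩ := by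
  rw [jacobiFactor, jacobiDn_zero, mul_one]

lemma normSq_jacobiFactor (u v : ℝ) :
    Complex.normSq (jacobiFactor he u v) =
      1 - e ^ 2 * jacobiSn he u ^ 2 * jacobiSn he v ^ 2 := by
  rw [jacobiFactor, Complex.normSq_mk]
  linear_combination jacobiSn_sq_add_jacobiCn_sq he u + jacobiSn he u ^ 2 * jacobiDn_sq he v

lemma jacobiFactor_ne_zero (u v : ℝ) : jacobiFactor he u v ≠ 0 := by
  rw [← Complex.normSq_pos, normSq_jacobiFactor]
  exact one_sub_sq_mul_jacobiSn_sq_pos he u v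

/-- The derivative of `x ↦ jacobiFactor he (u + x) (v - x)` at `x = 0`. -/
noncomputable def jacobiFactorDeriv (u v : ℝ) : ℂ :=
  ⟨-jacobiSn he u * jacobiDn he u, jacobiCn he u * jacobiDn he u * jacobiDn he v +
    jacobiSn he u * (e ^ 2 * jacobiSn he v * jacobiCn he v)⟩

lemma hasDerivAt_jacobiFactor_sub_right (w x : ℝ) :
    HasDerivAt (fun x => jacobiFactor he x (w - x)) (jacobiFactorDeriv he x (w - x)) x := by
  have him := (hasDerivAt_jacobiSn he x).mul ((hasDerivAt_jacobiDn he (w - x)).comp_const_sub w x)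
  rw [neg_neg] at him
  exact hasDerivAt_complexMk (hasDerivAt_jacobiCn he x) him

lemma hasDerivAt_jacobiFactor_sub_left (w x : ℝ) :
    HasDerivAt (fun x => jacobiFactor he (w - x) x) (-jacobiFactorDeriv he (w - x) x) x := by
  simpa only [sub_sub_cancel] using
    (hasDerivAt_jacobiFactor_sub_right he w (w - x)).comp_const_sub w x

lemma jacobiFactorDeriv_mul_conj (u v : ℝ) :
    jacobiFactorDeriv he u v * conj (jacobiFactor he v u) =
      -(jacobiFactor he u v * conj (jacobiFactorDeriv he v u)) := by
  have hu := jacobiSn_sq_add_jacobiCn_sq he u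
  have hv := jacobiSn_sq_add_jacobiCn_sq he v
  have hdu := jacobiDn_sq he u
  have hdv := jacobiDn_sq he v
  apply Complex.ext
  · simp only [jacobiFactor, jacobiFactorDeriv, Complex.mul_re, Complex.neg_re, Complex.conj_re,
      Complex.conj_im]
    linear_combination jacobiSn he u * jacobiCn he v * jacobiDn he u * hdv +
      jacobiSn he v * jacobiCn he u * jacobiDn he v * hdu
  · simp only [jacobiFactor, jacobiFactorDeriv, Complex.mul_im, Complex.neg_im, Complex.conj_re,
      Complex.conj_im]
    linear_combination jacobiSn he u * jacobiSn he v * (hdu - hdv) +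
      e ^ 2 * jacobiSn he u * jacobiSn he v * (hv - hu)

lemma jacobiFactor_div_conj (u v : ℝ) :
    jacobiFactor he u v / conj (jacobiFactor he v u) =
      ⟨jacobiCn he (u + v), jacobiSn he (u + v)⟩ := by
  set w := u + v with hw
  let q (x : ℝ) : ℂ := jacobiFactor he x (w - x) / conj (jacobiFactor he (w - x) x)
  have hq (x : ℝ) : HasDerivAt q 0 x := by
    refine ((hasDerivAt_jacobiFactor_sub_right he w x).div
      (hasDerivAt_jacobiFactor_sub_left he w x).star
      (star_ne_zero.2 (jacobiFactor_ne_zero he _ _))).congr_deriv ?_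
    rw [div_eq_zero_iff]
    left
    rw [star_neg, mul_neg, sub_neg_eq_add]
    exact add_eq_zero_iff_eq_neg.2 (jacobiFactorDeriv_mul_conj he x (w - x))
  have hconst : q u = q w :=
    is_const_of_deriv_eq_zero (fun x => (hq x).differentiableAt) (fun x => (hq x).deriv) u w
  simpa only [q, sub_self, jacobiFactor_zero_left, jacobiFactor_zero_right, map_one, div_one, hw,
    add_sub_cancel_left] using hconst

lemma jacobiCn_add (u v : ℝ) :
    jacobiCn he (u + v) =
      (jacobiCn he u * jacobiCn he v -
        jacobiSn he u * jacobiSn he v * jacobiDn he u * jacobiDn he v) /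
      (1 - e ^ 2 * jacobiSn he u ^ 2 * jacobiSn he v ^ 2) := by
  have h := congrArg Complex.re (jacobiFactor_div_conj he u v)
  rw [Complex.div_re, Complex.normSq_conj, normSq_jacobiFactor, ← add_div] at h
  refine h.symm.trans ?_
  simp only [jacobiFactor, Complex.conj_re, Complex.conj_im]
  ring

lemma jacobiSn_add (u v : ℝ) :
    jacobiSn he (u + v) =
      (jacobiSn he u * jacobiCn he v * jacobiDn he v +
        jacobiSn he v * jacobiCn he u * jacobiDn he u) /
      (1 - e ^ 2 * jacobiSn he u ^ 2 * jacobiSn he v ^ 2) := by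
  have h := congrArg Complex.im (jacobiFactor_div_conj he u v)
  rw [Complex.div_im, Complex.normSq_conj, normSq_jacobiFactor, ← sub_div] at h
  refine h.symm.trans ?_
  simp only [jacobiFactor, Complex.conj_re, Complex.conj_im]
  ring

end AdditionTheorem

section HalfShift

variable {e f : ℝ}

lemma sin_omegaHat_sq (he : e ^ 2 < 1) (hfe : f ^ 2 ≤ e ^ 2) :
    sin (omegaHat e f) ^ 2 = (e ^ 2 - f ^ 2) / (e ^ 2 * (1 - f ^ 2)) := by
  have hf : 0 ≤ 1 - f ^ 2 := by linarith
  have hnonneg : 0 ≤ (e ^ 2 - f ^ 2) / (e ^ 2 * (1 - f ^ 2)) :=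
    div_nonneg (sub_nonneg.2 hfe) (by positivity)
  have hle : (e ^ 2 - f ^ 2) / (e ^ 2 * (1 - f ^ 2)) ≤ 1 :=
    div_le_one_of_le₀ (by nlinarith [sq_nonneg f]) (by positivity)
  rw [omegaHat, sin_arcsin (neg_one_lt_zero.le.trans (sqrt_nonneg _)) (sqrt_le_one.2 hle),
    sq_sqrt hnonneg]

variable (he : e ^ 2 < 1)

lemma jacobiSn_ellF_omegaHat_nonneg : 0 ≤ jacobiSn he (ellF (omegaHat e f) e) := by
  rw [jacobiSn, jacobiAm_ellF]
  exact sin_nonneg_of_nonneg_of_le_pi (arcsin_nonneg.2 (sqrt_nonneg _))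
    ((arcsin_le_pi_div_two _).trans (half_le_self pi_pos.le))

lemma jacobiCn_ellF_omegaHat_nonneg : 0 ≤ jacobiCn he (ellF (omegaHat e f) e) := by
  rw [jacobiCn, jacobiAm_ellF]
  exact cos_arcsin_nonneg _

lemma jacobiSn_ellF_omegaHat_sq (hfe : f ^ 2 ≤ e ^ 2) :
    jacobiSn he (ellF (omegaHat e f) e) ^ 2 = (e ^ 2 - f ^ 2) / (e ^ 2 * (1 - f ^ 2)) := by
  rw [jacobiSn, jacobiAm_ellF, sin_omegaHat_sq he hfe]

lemma jacobiDn_ellF_omegaHat_sq (he₀ : 0 < e) (hfe : f ^ 2 ≤ e ^ 2) :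
    jacobiDn he (ellF (omegaHat e f) e) ^ 2 = (1 - e ^ 2) / (1 - f ^ 2) := by
  have hf : 1 - f ^ 2 ≠ 0 := by linarith
  rw [jacobiDn_sq, jacobiSn_ellF_omegaHat_sq he hfe]
  field_simp
  ring

lemma mul_jacobiCn_ellF_omegaHat (he₀ : 0 < e) (hf₀ : 0 ≤ f) (hfe : f ^ 2 ≤ e ^ 2) :
    e * jacobiCn he (ellF (omegaHat e f) e) = f * jacobiDn he (ellF (omegaHat e f) e) := by
  have hf : 1 - f ^ 2 ≠ 0 := by linarith
  refine (sq_eq_sq₀ (mul_nonneg he₀.le (jacobiCn_ellF_omegaHat_nonneg he))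
    (mul_nonneg hf₀ (jacobiDn_pos he _).le)).1 ?_
  rw [mul_pow, mul_pow, jacobiDn_ellF_omegaHat_sq he he₀ hfe,
    ← sub_eq_of_eq_add' (jacobiSn_sq_add_jacobiCn_sq he _).symm, jacobiSn_ellF_omegaHat_sq he hfe]
  field_simp
  ring

lemma sqrt_eq_mul_jacobiSn_ellF_omegaHat (he₀ : 0 < e) (hfe : f ^ 2 ≤ e ^ 2) :
    √((1 - f ^ 2) * (e ^ 2 - f ^ 2)) =
      e * (1 - f ^ 2) * jacobiSn he (ellF (omegaHat e f) e) := by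
  have hf : 0 < 1 - f ^ 2 := by linarith
  have hs := jacobiSn_ellF_omegaHat_nonneg (f := f) he
  rw [sqrt_eq_iff_eq_sq (mul_nonneg hf.le (sub_nonneg.2 hfe)) (by positivity), mul_pow,
    jacobiSn_ellF_omegaHat_sq he hfe]
  field_simp

end HalfShift

section FullShift

variable {e f : ℝ} (he : e ^ 2 < 1) (he₀ : 0 < e) (hfe : f ^ 2 ≤ e ^ 2)

include he he₀ hfe

lemma sq_sub_pow_four_pos : 0 < e ^ 2 - f ^ 4 := by
  nlinarith [pow_pos he₀ 2, sq_nonneg f]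

lemma one_sub_sq_mul_jacobiSn_ellF_omegaHat :
    1 - e ^ 2 * jacobiSn he (ellF (omegaHat e f) e) ^ 2 *
        jacobiSn he (ellF (omegaHat e f) e) ^ 2 =
      (1 - e ^ 2) * (e ^ 2 - f ^ 4) / (e * (1 - f ^ 2)) ^ 2 := by
  have hf : 1 - f ^ 2 ≠ 0 := by linarith
  rw [jacobiSn_ellF_omegaHat_sq he hfe]
  field_simp
  ring

lemma jacobiCn_two_mul_ellF_omegaHat :
    jacobiCn he (2 * ellF (omegaHat e f) e) =
      -(e ^ 2 + f ^ 4 - 2 * f ^ 2) / (e ^ 2 - f ^ 4) := by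
  have hf : 1 - f ^ 2 ≠ 0 := by linarith
  have he₁ : 1 - e ^ 2 ≠ 0 := by linarith
  have hA₂ := (sq_sub_pow_four_pos he he₀ hfe).ne'
  have hs := jacobiSn_ellF_omegaHat_sq he hfe
  have hnum : jacobiCn he (ellF (omegaHat e f) e) ^ 2 -
      jacobiSn he (ellF (omegaHat e f) e) ^ 2 * jacobiDn he (ellF (omegaHat e f) e) ^ 2 =
      -((1 - e ^ 2) * (e ^ 2 + f ^ 4 - 2 * f ^ 2)) / (e * (1 - f ^ 2)) ^ 2 := by
    rw [← sub_eq_of_eq_add' (jacobiSn_sq_add_jacobiCn_sq he _).symm, hs,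
      jacobiDn_ellF_omegaHat_sq he he₀ hfe]
    field_simp
    ring
  rw [two_mul, jacobiCn_add, one_sub_sq_mul_jacobiSn_ellF_omegaHat he he₀ hfe,
    mul_assoc _ (jacobiDn he _), ← sq, ← sq, ← sq, hnum]
  field_simp

lemma jacobiSn_two_mul_ellF_omegaHat (hf₀ : 0 ≤ f) :
    jacobiSn he (2 * ellF (omegaHat e f) e) =
      2 * f * √((1 - f ^ 2) * (e ^ 2 - f ^ 2)) / (e ^ 2 - f ^ 4) := by
  have hf : 1 - f ^ 2 ≠ 0 := by linarith
  have he₁ : 1 - e ^ 2 ≠ 0 := by linarith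
  have hA₂ := (sq_sub_pow_four_pos he he₀ hfe).ne'
  have hcd : jacobiCn he (ellF (omegaHat e f) e) * jacobiDn he (ellF (omegaHat e f) e) =
      f * (1 - e ^ 2) / (e * (1 - f ^ 2)) := by
    rw [mul_comm e, ← div_div, mul_div_assoc, ← jacobiDn_ellF_omegaHat_sq he he₀ hfe,
      eq_div_iff he₀.ne']
    linear_combination
      jacobiDn he (ellF (omegaHat e f) e) * mul_jacobiCn_ellF_omegaHat he he₀ hf₀ hfe
  rw [two_mul (ellF _ _), jacobiSn_add, one_sub_sq_mul_jacobiSn_ellF_omegaHat he he₀ hfe,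
    sqrt_eq_mul_jacobiSn_ellF_omegaHat he he₀ hfe, mul_assoc, hcd]
  field_simp
  ring

lemma jacobiDn_two_mul_ellF_omegaHat (hf₀ : 0 ≤ f) :
    jacobiDn he (2 * ellF (omegaHat e f) e) =
      (e ^ 2 * (1 - 2 * f ^ 2) + f ^ 4) / (e ^ 2 - f ^ 4) := by
  have hA₂ := sq_sub_pow_four_pos he he₀ hfe
  have hA₄ : 0 ≤ e ^ 2 * (1 - 2 * f ^ 2) + f ^ 4 := by
    nlinarith [sq_nonneg (e ^ 2 - f ^ 2), pow_pos he₀ 2]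
  have hrad : 0 ≤ (1 - f ^ 2) * (e ^ 2 - f ^ 2) := mul_nonneg (by linarith) (by linarith)
  rw [← sq_eq_sq₀ (jacobiDn_pos he _).le (by positivity), jacobiDn_sq,
    jacobiSn_two_mul_ellF_omegaHat he he₀ hfe hf₀, div_pow, mul_pow, sq_sqrt hrad]
  field_simp
  ring

lemma poncelet_jacobi (hf₀ : 0 ≤ f) (u : ℝ) :
    poncelet e f (jacobiCn he u, jacobiSn he u) =
      (jacobiCn he (u + 2 * ellF (omegaHat e f) e),
        jacobiSn he (u + 2 * ellF (omegaHat e f) e)) := by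
  set S := jacobiSn he (2 * ellF (omegaHat e f) e) with hS
  set C := jacobiCn he (2 * ellF (omegaHat e f) e) with hC
  set D := jacobiDn he (2 * ellF (omegaHat e f) e) with hD
  have hA₂ := (sq_sub_pow_four_pos he he₀ hfe).ne'
  have hA₁ : 2 * f * √((1 - f ^ 2) * (e ^ 2 - f ^ 2)) = (e ^ 2 - f ^ 4) * S := by
    rw [hS, jacobiSn_two_mul_ellF_omegaHat he he₀ hfe hf₀, mul_div_cancel₀ _ hA₂]
  have hA₃ : e ^ 2 + f ^ 4 - 2 * f ^ 2 = -((e ^ 2 - f ^ 4) * C) := by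
    rw [hC, jacobiCn_two_mul_ellF_omegaHat he he₀ hfe, mul_div_cancel₀ _ hA₂, neg_neg]
  have hA₄ : e ^ 2 * (1 - 2 * f ^ 2) + f ^ 4 = (e ^ 2 - f ^ 4) * D := by
    rw [hD, jacobiDn_two_mul_ellF_omegaHat he he₀ hfe hf₀, mul_div_cancel₀ _ hA₂]
  have hden : (e ^ 2 - f ^ 4) ^ 2 - ((e ^ 2 - f ^ 4) * S) ^ 2 * e ^ 2 * jacobiSn he u ^ 2 =
      (e ^ 2 - f ^ 4) ^ 2 * (1 - e ^ 2 * jacobiSn he u ^ 2 * S ^ 2) := by ring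
  rw [jacobiCn_add, jacobiSn_add, poncelet]
  simp only [hA₁, hA₃, hA₄, hden]
  rw [← jacobiDn, Prod.mk.injEq, ← neg_div, ← hC, ← hS, ← hD]
  constructor
  · refine Eq.trans ?_ (mul_div_mul_left _ _ (pow_ne_zero 2 hA₂))
    ring
  · refine Eq.trans ?_ (mul_div_mul_left _ _ (pow_ne_zero 2 hA₂))
    ring

end FullShift

section Lift

variable {e : ℝ} (he : e ^ 2 < 1)

lemma two_pi_mul_conjTranslation_ellPhase (ρ θ : ℝ) :
    2 * π * conjTranslation (ellPhase he) ρ θ =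
      jacobiAm he (ellF (2 * π * θ) e + 4 * ellK e * ρ) := by
  have hK := (ellK_pos he).ne'
  have h := apply_conjTranslation (ellPhase he) ρ θ
  rw [ellPhase_apply, ellPhase_apply] at h
  field_simp at h
  rw [← h, jacobiAm_ellF]

include he in
lemma four_mul_ellK_mul_rhoHat (f : ℝ) :
    4 * ellK e * rhoHat e f = 2 * ellF (omegaHat e f) e := by
  have hK := (ellK_pos he).ne'
  rw [rhoHat]
  field_simp
  ring

lemma poncelet_cos_sin (he₀ : 0 < e) {f : ℝ} (hfe : f ^ 2 ≤ e ^ 2) (hf₀ : 0 ≤ f) (φ : ℝ) :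
    poncelet e f (cos φ, sin φ) =
      (cos (jacobiAm he (ellF φ e + 2 * ellF (omegaHat e f) e)),
        sin (jacobiAm he (ellF φ e + 2 * ellF (omegaHat e f) e))) := by
  simpa only [jacobiCn, jacobiSn, jacobiAm_ellF] using poncelet_jacobi he he₀ hfe hf₀ (ellF φ e)

end Lift

/-- for `0 < f < e < 1`, the standard Poncelet map `P_e^f` maps the unit
circle to itself and admits a continuous strictly increasing lift `L` with
`L(θ+1) = L(θ)+1`, whose translation number is the billiard rotation number `ρ̂(e,f)`. -/
theorem poncelet_lift_and_rotation_number (e f : ℝ)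
    (hf : 0 < f) (hfe : f < e) (he : e < 1) :
    (∀ X Y : ℝ, X ^ 2 + Y ^ 2 = 1 →
      (poncelet e f (X, Y)).1 ^ 2 + (poncelet e f (X, Y)).2 ^ 2 = 1) ∧
    ∃ L : ℝ → ℝ, Continuous L ∧ StrictMono L ∧
      (∀ θ : ℝ, L (θ + 1) = L θ + 1) ∧
      (∀ θ : ℝ, poncelet e f (Real.cos (2 * Real.pi * θ), Real.sin (2 * Real.pi * θ)) =
        (Real.cos (2 * Real.pi * L θ), Real.sin (2 * Real.pi * L θ))) ∧
      Filter.Tendsto (fun n : ℕ => L^[n] 0 / n) Filter.atTop (nhds (rhoHat e f)) := by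
  have he₀ : 0 < e := hf.trans hfe
  have he₂ : e ^ 2 < 1 := pow_lt_one₀ he₀.le he two_ne_zero
  have hfe₂ : f ^ 2 ≤ e ^ 2 := pow_le_pow_left₀ hf.le hfe.le 2
  refine ⟨fun X Y hXY => ?_, conjTranslation (ellPhase he₂) (rhoHat e f), OrderIso.continuous _,
    OrderIso.strictMono _, conjTranslation_add_one (ellPhase_add_one he₂), fun θ => ?_,
    tendsto_iterate_conjTranslation_div (ellPhase_add_one he₂)⟩
  · obtain ⟨u, rfl, rfl⟩ := exists_jacobiCn_jacobiSn_eq he₂ hXY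
    rw [poncelet_jacobi he₂ he₀ hfe₂ hf.le, add_comm]
    exact jacobiSn_sq_add_jacobiCn_sq he₂ _
  · rw [two_pi_mul_conjTranslation_ellPhase, four_mul_ellK_mul_rhoHat he₂,
      poncelet_cos_sin he₂ he₀ hfe₂ hf.le]
end

section
/- For 0 < f < e < 1 and any (X,Y) ∈ ℝ² with X² + Y² = 1: the denominator A2² − A1²e²Y² of the standard Poncelet map is nonzero; the image (X',Y') = P_e^f(X,Y) satisfies X'² + Y'² = 1 and (X',Y') ≠ (X,Y); and the line through (X,Y) and (X',Y') is tangent to the ellipse S_e^f = {(x,y) : ((1−f²)/(1−e²))x² + y² = f²/e²}, i.e. there is exactly one t ∈ ℝ such that (1−t)(X,Y) + t(X',Y') ∈ S_e^f. -/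
open Real

/-!
With `X = cn u`, `Y = sn u` for the modulus `e`, the Poncelet map is the translation
`u ↦ u + v`, where `(sn v, cn v, dn v) = (A1, -A3, A4) / A2`. The addition theorem of the Jacobi
elliptic functions keeps the image on the circle and yields
`cn u * cn (u + v) + dn v * sn u * sn (u + v) = cn v`. A chord of the unit circle is tangent to a
given ellipse exactly when a relation of this shape holds between its endpoints, and for the pencil
ellipse `S_e^f` that relation has coefficients `dn v = A4 / A2` and `cn v = -A3 / A2`.
-/

/-- A point of the affine elliptic curve parametrized by the Jacobi functions `(sn u, cn u, dn u)`
of modulus `k`. Only the algebraic relations are recorded; the argument `u` is not part of the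
data. -/
structure JacobiPoint {K : Type*} [Field K] (k : K) where
  sn : K
  cn : K
  dn : K
  sn_sq_add_cn_sq : sn ^ 2 + cn ^ 2 = 1
  dn_sq_add_sq_mul_sn_sq : dn ^ 2 + k ^ 2 * sn ^ 2 = 1

namespace JacobiPoint

section Field

variable {K : Type*} [Field K] {k : K} (p q : JacobiPoint k)

/-- The common denominator in the addition theorem for the Jacobi functions. -/
def addDenom : K := 1 - k ^ 2 * p.sn ^ 2 * q.sn ^ 2

/-- The value `cn (u + v)` given by the addition theorem; junk when `p.addDenom q = 0`. -/
def cnAdd : K := (p.cn * q.cn - p.sn * q.sn * p.dn * q.dn) / p.addDenom q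

/-- The value `sn (u + v)` given by the addition theorem; junk when `p.addDenom q = 0`. -/
def snAdd : K := (p.sn * q.cn * q.dn + q.sn * p.cn * p.dn) / p.addDenom q

variable {p q}

theorem cnAdd_sq_add_snAdd_sq (h : p.addDenom q ≠ 0) : p.cnAdd q ^ 2 + p.snAdd q ^ 2 = 1 := by
  rw [cnAdd, snAdd, div_pow, div_pow, ← add_div, div_eq_one_iff_eq (pow_ne_zero 2 h), addDenom]
  linear_combination
    (q.cn ^ 2 + q.sn ^ 2 * p.dn ^ 2) * p.sn_sq_add_cn_sq +
    (1 - p.sn ^ 2 + p.sn ^ 2 * q.dn ^ 2) * q.sn_sq_add_cn_sq +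
    (p.sn ^ 2 * q.sn ^ 2 * q.dn ^ 2 + q.sn ^ 2 * (1 - p.sn ^ 2)) *
      p.dn_sq_add_sq_mul_sn_sq +
    (p.sn ^ 2 * q.sn ^ 2 * (1 - k ^ 2 * p.sn ^ 2) + p.sn ^ 2 * (1 - q.sn ^ 2)) *
      q.dn_sq_add_sq_mul_sn_sq

theorem cn_mul_cnAdd_add_dn_mul_sn_mul_snAdd (h : p.addDenom q ≠ 0) :
    p.cn * p.cnAdd q + q.dn * (p.sn * p.snAdd q) = q.cn := by
  have numerators : p.cn * (p.cn * q.cn - p.sn * q.sn * p.dn * q.dn) +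
      q.dn * (p.sn * (p.sn * q.cn * q.dn + q.sn * p.cn * p.dn)) = q.cn * p.addDenom q := by
    rw [addDenom]
    linear_combination q.cn * p.sn_sq_add_cn_sq +
      q.cn * p.sn ^ 2 * q.dn_sq_add_sq_mul_sn_sq
  rw [cnAdd, snAdd, ← mul_div_assoc, ← mul_div_assoc, ← mul_div_assoc, ← add_div, numerators,
    mul_div_cancel_right₀ _ h]

end Field

section OrderedField

variable {K : Type*} [Field K] [LinearOrder K] [IsStrictOrderedRing K] {k : K}

theorem sn_sq_le_one (p : JacobiPoint k) : p.sn ^ 2 ≤ 1 := by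
  linarith [p.sn_sq_add_cn_sq, sq_nonneg p.cn]

theorem dn_le_one (p : JacobiPoint k) : p.dn ≤ 1 := by
  have dn_sq_le_one : p.dn ^ 2 ≤ 1 := by
    linarith [p.dn_sq_add_sq_mul_sn_sq, mul_nonneg (sq_nonneg k) (sq_nonneg p.sn)]
  exact le_of_abs_le ((sq_le_one_iff_abs_le_one _).mp dn_sq_le_one)

theorem addDenom_pos (hk : k ^ 2 < 1) (p q : JacobiPoint k) : 0 < p.addDenom q := by
  have sn_sq_mul_le : p.sn ^ 2 * q.sn ^ 2 ≤ 1 :=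
    mul_le_one₀ p.sn_sq_le_one (sq_nonneg _) q.sn_sq_le_one
  rw [addDenom, sub_pos, mul_assoc]
  exact (mul_le_of_le_one_right (sq_nonneg k) sn_sq_mul_le).trans_lt hk

theorem add_ne_self {p q : JacobiPoint k} (h : p.addDenom q ≠ 0) (hcd : q.cn < q.dn) :
    (p.cnAdd q, p.snAdd q) ≠ (p.cn, p.sn) := by
  intro heq
  have hcn : q.cn < 1 := hcd.trans_le q.dn_le_one
  obtain ⟨hcnAdd, hsnAdd⟩ := Prod.mk.inj heq
  have relation := cn_mul_cnAdd_add_dn_mul_sn_mul_snAdd h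
  rw [hcnAdd, hsnAdd] at relation
  have weighted_sum : (1 - q.cn) * p.cn ^ 2 + (q.dn - q.cn) * p.sn ^ 2 = 0 := by
    linear_combination relation - q.cn * p.sn_sq_add_cn_sq
  have cn_eq_zero : p.cn = 0 := by
    by_contra hne
    have := mul_pos (sub_pos.mpr hcn) (sq_pos_of_ne_zero hne)
    linarith [mul_nonneg (sub_pos.mpr hcd).le (sq_nonneg p.sn)]
  have sn_eq_zero : p.sn = 0 := by simpa [cn_eq_zero, (sub_pos.mpr hcd).ne'] using weighted_sum
  simpa [cn_eq_zero, sn_eq_zero] using p.sn_sq_add_cn_sq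

end OrderedField

end JacobiPoint

theorem existsUnique_line_inter_conic {K : Type*} [Field K] [NeZero (2 : K)] {a b c X Y U V : K}
    (hdir : a * (U - X) ^ 2 + b * (V - Y) ^ 2 ≠ 0)
    (htan : c * (a * (U - X) ^ 2 + b * (V - Y) ^ 2) = a * b * (X * V - Y * U) ^ 2) :
    ∃! t : K, a * ((1 - t) * X + t * U) ^ 2 + b * ((1 - t) * Y + t * V) ^ 2 = c := by
  set A := a * (U - X) ^ 2 + b * (V - Y) ^ 2 with hA
  set B := 2 * (a * X * (U - X) + b * Y * (V - Y)) with hB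
  set C := a * X ^ 2 + b * Y ^ 2 - c with hC
  have discrim_eq_zero : discrim A B C = 0 := by
    rw [discrim, hC, hB]
    linear_combination 4 * htan - 4 * (a * X ^ 2 + b * Y ^ 2) * hA
  have mem_iff (t : K) : a * ((1 - t) * X + t * U) ^ 2 + b * ((1 - t) * Y + t * V) ^ 2 = c ↔
      t = -B / (2 * A) := by
    rw [← quadratic_eq_zero_iff_of_discrim_eq_zero hdir discrim_eq_zero, ← sub_eq_zero, hA, hB, hC]
    ring_nf
  simp only [mem_iff, existsUnique_eq]

theorem existsUnique_chord_inter_ellipse {K : Type*} [Field K] [LinearOrder K]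
    [IsStrictOrderedRing K] {a b c X Y U V : K} (ha : 0 < a) (hb : 0 < b)
    (hXY : X ^ 2 + Y ^ 2 = 1) (hUV : U ^ 2 + V ^ 2 = 1) (hne : (U, V) ≠ (X, Y))
    (htan : c * (a * (1 - X * U + Y * V) + b * (1 + X * U - Y * V)) =
      a * b * (1 + X * U + Y * V)) :
    ∃! t : K, a * ((1 - t) * X + t * U) ^ 2 + b * ((1 - t) * Y + t * V) ^ 2 = c := by
  have dx_sq : (U - X) ^ 2 = (1 - X * U - Y * V) * (1 - X * U + Y * V) := by
    linear_combination V ^ 2 * hXY + (1 - X ^ 2) * hUV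
  have dy_sq : (V - Y) ^ 2 = (1 - X * U - Y * V) * (1 + X * U - Y * V) := by
    linear_combination U ^ 2 * hXY + (1 - Y ^ 2) * hUV
  have cross_sq : (X * V - Y * U) ^ 2 = (1 - X * U - Y * V) * (1 + X * U + Y * V) := by
    linear_combination (U ^ 2 + V ^ 2) * hXY + hUV
  apply existsUnique_line_inter_conic
  · intro hzero
    obtain ⟨hx, hy⟩ := (add_eq_zero_iff_of_nonneg (mul_nonneg ha.le (sq_nonneg _))
      (mul_nonneg hb.le (sq_nonneg _))).mp hzero
    simp only [mul_eq_zero, ha.ne', hb.ne', false_or, sq_eq_zero_iff, sub_eq_zero] at hx hy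
    exact hne (Prod.ext hx hy)
  · rw [dx_sq, dy_sq, cross_sq]
    linear_combination (1 - X * U - Y * V) * htan

section Poncelet

variable {e f X Y : ℝ}

theorem pow_four_lt_sq (hfe : f ^ 2 < e ^ 2) (hf : f ^ 2 ≤ 1) : f ^ 4 < e ^ 2 :=
  calc
    f ^ 4 = f ^ 2 * f ^ 2 := by ring
    _ ≤ f ^ 2 := mul_le_of_le_one_right (sq_nonneg f) hf
    _ < e ^ 2 := hfe

theorem sq_two_mul_mul_sqrt (hfe : f ^ 2 ≤ e ^ 2) (hf : f ^ 2 ≤ 1) :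
    (2 * f * √((1 - f ^ 2) * (e ^ 2 - f ^ 2))) ^ 2 =
      4 * f ^ 2 * ((1 - f ^ 2) * (e ^ 2 - f ^ 2)) := by
  rw [mul_pow, sq_sqrt (mul_nonneg (sub_nonneg.mpr hf) (sub_nonneg.mpr hfe))]
  ring

/-- The point of the unit circle with coordinates `X = cn u`, `Y = sn u`, lifted to the Jacobi curve
by the nonnegative choice of `dn u`. -/
noncomputable def circleLift (hXY : X ^ 2 + Y ^ 2 = 1) (he : e ^ 2 ≤ 1) : JacobiPoint e where
  sn := Y
  cn := X
  dn := √(1 - e ^ 2 * Y ^ 2)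
  sn_sq_add_cn_sq := by rw [add_comm, hXY]
  dn_sq_add_sq_mul_sn_sq := by
    have hY : Y ^ 2 ≤ 1 := by linarith [sq_nonneg X]
    rw [sq_sqrt (sub_nonneg.mpr (mul_le_one₀ he (sq_nonneg Y) hY)), sub_add_cancel]

/-- The element of the Jacobi curve by which the Poncelet map translates; it is
`(A1, -A3, A4) / A2` in the notation of `poncelet`. -/
noncomputable def ponceletShift (hfe : f ^ 2 < e ^ 2) (hf : f ^ 2 ≤ 1) : JacobiPoint e where
  sn := 2 * f * √((1 - f ^ 2) * (e ^ 2 - f ^ 2)) / (e ^ 2 - f ^ 4)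
  cn := -(e ^ 2 + f ^ 4 - 2 * f ^ 2) / (e ^ 2 - f ^ 4)
  dn := (e ^ 2 * (1 - 2 * f ^ 2) + f ^ 4) / (e ^ 2 - f ^ 4)
  sn_sq_add_cn_sq := by
    have hA2 : e ^ 2 - f ^ 4 ≠ 0 := (sub_pos.mpr (pow_four_lt_sq hfe hf)).ne'
    rw [div_pow, div_pow, ← add_div, div_eq_one_iff_eq (pow_ne_zero 2 hA2),
      sq_two_mul_mul_sqrt hfe.le hf]
    ring
  dn_sq_add_sq_mul_sn_sq := by
    have hA2 : e ^ 2 - f ^ 4 ≠ 0 := (sub_pos.mpr (pow_four_lt_sq hfe hf)).ne'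
    rw [div_pow, div_pow, ← mul_div_assoc, ← add_div, div_eq_one_iff_eq (pow_ne_zero 2 hA2),
      sq_two_mul_mul_sqrt hfe.le hf]
    ring

theorem ponceletShift_cn_lt_dn (hfe : f ^ 2 < e ^ 2) (hf : f ^ 2 < 1) :
    (ponceletShift hfe hf.le).cn < (ponceletShift hfe hf.le).dn := by
  have gap_pos : 0 < (e ^ 2 - f ^ 2) * (1 - f ^ 2) := mul_pos (sub_pos.mpr hfe) (sub_pos.mpr hf)
  refine div_lt_div_of_pos_right ?_ (sub_pos.mpr (pow_four_lt_sq hfe hf.le))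
  linarith

theorem poncelet_denom_eq (hXY : X ^ 2 + Y ^ 2 = 1) (he : e ^ 2 ≤ 1) (hfe : f ^ 2 < e ^ 2) :
    (e ^ 2 - f ^ 4) ^ 2 - (2 * f * √((1 - f ^ 2) * (e ^ 2 - f ^ 2))) ^ 2 * e ^ 2 * Y ^ 2 =
      (e ^ 2 - f ^ 4) ^ 2 * (circleLift hXY he).addDenom (ponceletShift hfe (hfe.le.trans he)) := by
  have hA2 : e ^ 2 - f ^ 4 ≠ 0 := (sub_pos.mpr (pow_four_lt_sq hfe (hfe.le.trans he))).ne'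
  simp only [JacobiPoint.addDenom, circleLift, ponceletShift]
  field_simp

theorem poncelet_eq_add (hXY : X ^ 2 + Y ^ 2 = 1) (he : e ^ 2 ≤ 1) (hfe : f ^ 2 < e ^ 2) :
    poncelet e f (X, Y) = ((circleLift hXY he).cnAdd (ponceletShift hfe (hfe.le.trans he)),
      (circleLift hXY he).snAdd (ponceletShift hfe (hfe.le.trans he))) := by
  have hA2 : e ^ 2 - f ^ 4 ≠ 0 := (sub_pos.mpr (pow_four_lt_sq hfe (hfe.le.trans he))).ne'
  simp only [poncelet, poncelet_denom_eq hXY he hfe, JacobiPoint.cnAdd, JacobiPoint.snAdd,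
    ← div_div]
  generalize (circleLift hXY he).addDenom (ponceletShift hfe (hfe.le.trans he)) = D
  simp only [circleLift, ponceletShift, Prod.mk.injEq]
  constructor
  · rw [← neg_div]
    congr 1
    field_simp
    ring
  · congr 1
    field_simp
    ring

theorem existsUnique_chord_inter_pencil_ellipse {U V : ℝ} (he : e ^ 2 < 1) (hfe : f ^ 2 < e ^ 2)
    (hXY : X ^ 2 + Y ^ 2 = 1) (hUV : U ^ 2 + V ^ 2 = 1) (hne : (U, V) ≠ (X, Y))
    (hrel : X * U + (ponceletShift hfe (hfe.trans he).le).dn * (Y * V) =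
      (ponceletShift hfe (hfe.trans he).le).cn) :
    ∃! t : ℝ, (1 - f ^ 2) / (1 - e ^ 2) * ((1 - t) * X + t * U) ^ 2 +
      ((1 - t) * Y + t * V) ^ 2 = f ^ 2 / e ^ 2 := by
  have hf : f ^ 2 < 1 := hfe.trans he
  have tangency : f ^ 2 / e ^ 2 *
      ((1 - f ^ 2) / (1 - e ^ 2) * (1 - X * U + Y * V) + 1 * (1 + X * U - Y * V)) =
        (1 - f ^ 2) / (1 - e ^ 2) * 1 * (1 + X * U + Y * V) := by
    have hA2 : e ^ 2 - f ^ 4 ≠ 0 := (sub_pos.mpr (pow_four_lt_sq hfe hf.le)).ne'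
    have he_ne : e ≠ 0 := sq_pos_iff.mp ((sq_nonneg f).trans_lt hfe)
    have he_compl : 1 - e ^ 2 ≠ 0 := (sub_pos.mpr he).ne'
    simp only [ponceletShift] at hrel
    field_simp at hrel ⊢
    linear_combination -hrel
  simpa only [one_mul] using existsUnique_chord_inter_ellipse
    (div_pos (sub_pos.mpr hf) (sub_pos.mpr he)) one_pos hXY hUV hne tangency

end Poncelet

/-- for `0 < f < e < 1` and `(X,Y)` on the unit circle, the
denominator of the standard Poncelet map is nonzero, the image lies on the unit
circle and differs from `(X,Y)`, and the segment joining the point to its image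
is tangent to the standard pencil ellipse `S_e^f`. -/
theorem poncelet_tangency (e f X Y : ℝ)
    (hf : 0 < f) (hfe : f < e) (he : e < 1) (hXY : X ^ 2 + Y ^ 2 = 1) :
    ((e ^ 2 - f ^ 4) ^ 2 -
        (2 * f * Real.sqrt ((1 - f ^ 2) * (e ^ 2 - f ^ 2))) ^ 2 * e ^ 2 * Y ^ 2 ≠ 0) ∧
    (poncelet e f (X, Y)).1 ^ 2 + (poncelet e f (X, Y)).2 ^ 2 = 1 ∧
    poncelet e f (X, Y) ≠ (X, Y) ∧
    (∃! t : ℝ,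
      ((1 - f ^ 2) / (1 - e ^ 2)) * ((1 - t) * X + t * (poncelet e f (X, Y)).1) ^ 2 +
        ((1 - t) * Y + t * (poncelet e f (X, Y)).2) ^ 2 = f ^ 2 / e ^ 2) := by
  have hfe_sq : f ^ 2 < e ^ 2 := pow_lt_pow_left₀ hfe hf.le two_ne_zero
  have he_sq : e ^ 2 < 1 := pow_lt_one₀ (hf.trans hfe).le he two_ne_zero
  have hf_sq : f ^ 2 < 1 := hfe_sq.trans he_sq
  have A2_pos : 0 < e ^ 2 - f ^ 4 := sub_pos.mpr (pow_four_lt_sq hfe_sq hf_sq.le)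
  have denom_ne := (JacobiPoint.addDenom_pos he_sq (circleLift hXY he_sq.le)
    (ponceletShift hfe_sq hf_sq.le)).ne'
  have on_circle := JacobiPoint.cnAdd_sq_add_snAdd_sq denom_ne
  have moved := JacobiPoint.add_ne_self denom_ne (ponceletShift_cn_lt_dn hfe_sq hf_sq)
  have relation := JacobiPoint.cn_mul_cnAdd_add_dn_mul_sn_mul_snAdd denom_ne
  rw [poncelet_denom_eq hXY he_sq.le hfe_sq, poncelet_eq_add hXY he_sq.le hfe_sq]
  exact ⟨mul_ne_zero (pow_ne_zero 2 A2_pos.ne') denom_ne, on_circle, moved,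
    existsUnique_chord_inter_pencil_ellipse he_sq hfe_sq hXY on_circle moved relation⟩
end
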